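/- Let Λ be a well-rounded lattice of full rank in ℝ² and let Ω be a lattice of full rank in ℝ². Then Ω is similar to Λ if and only if Ω is also well-rounded and θ(Λ) = θ(Ω), where θ(·) denotes the angle of a well-rounded lattice. In particular, the well-rounded property is preserved under similarity. -/

import Mathlib

noncomputable section

open InnerProductGeometry Real
open scoped Classical

/-- The Euclidean plane `ℝ²`. -/
abbrev E2 := EuclideanSpace ℝ (Fin 2)

/-- `x₁, x₂` form a ℤ-basis of the lattice `Λ ⊆ ℝ²`: they are linearly independent
over ℝ and `Λ` is exactly the set of their integer linear combinations. -/
def IsZBasis (Λ : Set E2) (x₁ x₂ : E2) : Prop :=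
  LinearIndependent ℝ ![x₁, x₂] ∧ Λ = {v : E2 | ∃ a b : ℤ, v = a • x₁ + b • x₂}

/-- `Λ` is a lattice of full rank in `ℝ²`, i.e. `Λ = XZ²` for an invertible matrix `X`. -/
def IsLattice (Λ : Set E2) : Prop := ∃ x₁ x₂ : E2, IsZBasis Λ x₁ x₂

/-- The `i`-th successive minimum of `Λ`:
`λᵢ = inf {λ > 0 : Λ ∩ λB contains i linearly independent nonzero vectors}`. -/
noncomputable def succMin (Λ : Set E2) (i : ℕ) : ℝ :=
  sInf {r : ℝ | 0 < r ∧ ∃ v : Fin i → E2,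
    (∀ j, v j ∈ Λ ∧ ‖v j‖ ≤ r) ∧ LinearIndependent ℝ v}

/-- `|det X|` for the basis matrix with columns `x₁, x₂`. -/
def detB (x₁ x₂ : E2) : ℝ := |x₁ 0 * x₂ 1 - x₁ 1 * x₂ 0|

/-- The determinant of a lattice: `|det X|` for a basis matrix `X` of `Λ`
(independent of the choice of basis). -/
noncomputable def latDet (Λ : Set E2) : ℝ :=
  if h : IsLattice Λ then detB h.choose h.choose_spec.choose else 0

/-- The lattice packing density `Δ(Λ) = π λ₁² / (4 det Λ)`. -/
noncomputable def density (Λ : Set E2) : ℝ :=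
  π * (succMin Λ 1) ^ 2 / (4 * latDet Λ)

/-- `x₁, x₂` are vectors of `Λ` corresponding to the successive minima, chosen so that
the angle between them lies in `[0, π/2]`. -/
def IsMinPair (Λ : Set E2) (x₁ x₂ : E2) : Prop :=
  x₁ ∈ Λ ∧ x₂ ∈ Λ ∧ LinearIndependent ℝ ![x₁, x₂] ∧
    ‖x₁‖ = succMin Λ 1 ∧ ‖x₂‖ = succMin Λ 2 ∧ angle x₁ x₂ ≤ π / 2

/-- The angle `θ(Λ)` of a lattice: the angle between a pair of vectors corresponding to the
successive minima chosen with angle in `[0, π/2]` (for a well-rounded lattice this does not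
depend on the choice of such a pair). -/
noncomputable def latAngle (Λ : Set E2) : ℝ :=
  if h : ∃ p : E2 × E2, IsMinPair Λ p.1 p.2 then angle h.choose.1 h.choose.2 else 0

/-- `Λ` and `Ω` are similar lattices: `Ω = α U Λ` for a nonzero real `α` and an
orthogonal `2×2` matrix `U`. -/
def LatSimilar (Λ Ω : Set E2) : Prop :=
  ∃ (α : ℝ) (U : Matrix (Fin 2) (Fin 2) ℝ), α ≠ 0 ∧ U.transpose * U = 1 ∧
    Ω = (fun v => α • Matrix.toEuclideanLin U v) '' Λ

/-- The hexagonal lattice, spanned over ℤ by `(1, 0)` and `(1/2, √3/2)`. -/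
def hexLattice : Set E2 :=
  {v : E2 | ∃ a b : ℤ, v = a • ((WithLp.equiv 2 (Fin 2 → ℝ)).symm ![1, 0]) +
    b • ((WithLp.equiv 2 (Fin 2 → ℝ)).symm ![1 / 2, Real.sqrt 3 / 2])}

/-!
Vectors `x, y` realising the successive minima of a planar lattice form a `ℤ`-basis: reducing the
coordinates of a lattice vector to `[-1/2, 1/2]` leaves a lattice vector that is too short to be
nonzero. Since the area `‖x‖ ‖y‖ sin θ` of a fundamental parallelogram depends only on the lattice,
the lattice determines `sin θ`, and hence the angle `θ ∈ [0, π/2]`. A similarity carries minimal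
bases to minimal bases; conversely, the angle and the ratio of the successive minima determine the
Gram matrix of a minimal basis up to scaling, hence the lattice up to similarity.
-/

section LinearAlgebra

theorem exists_smul_add_smul_eq {K V : Type*} [DivisionRing K] [AddCommGroup V] [Module K V]
    (hV : Module.finrank K V = 2) {x y : V} (hxy : LinearIndependent K ![x, y]) (v : V) :
    ∃ s t : K, s • x + t • y = v := by
  have := Module.finite_of_finrank_eq_succ hV
  have hspan : Submodule.span K {x, y} = ⊤ := by
    simpa [Set.pair_comm] using hxy.span_eq_top_of_card_eq_finrank' (by simp [hV])
  exact Submodule.mem_span_pair.1 (hspan ▸ Submodule.mem_top)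

theorem linearIndependent_pair_or_of_ne_zero {K V : Type*} [Field K] [AddCommGroup V]
    [Module K V] {x u v : V} (hx : x ≠ 0) (huv : LinearIndependent K ![u, v]) :
    LinearIndependent K ![x, u] ∨ LinearIndependent K ![x, v] := by
  simp only [LinearIndependent.pair_iff' hx]
  by_contra! h
  obtain ⟨⟨a, rfl⟩, ⟨b, rfl⟩⟩ := h
  have hab := LinearIndependent.pair_iff.1 huv b (-a) (by module)
  exact huv.ne_zero 1 (by simp [hab.1])

theorem linearIndependent_pair_map {K V W : Type*} [Ring K] [AddCommGroup V] [AddCommGroup W]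
    [Module K V] [Module K W] {x y : V} (hxy : LinearIndependent K ![x, y]) {f : V →ₗ[K] W}
    (hf : Function.Injective f) : LinearIndependent K ![f x, f y] := by
  rw [LinearIndependent.pair_iff] at hxy ⊢
  exact fun s t hst => hxy s t (hf (by simpa using hst))

theorem norm_smul_add_smul_lt_max {V : Type*} [NormedAddCommGroup V] [NormedSpace ℝ V]
    [StrictConvexSpace ℝ V] {x y : V} (hxy : LinearIndependent ℝ ![x, y]) {a b : ℝ}
    (ha : |a| ≤ 1 / 2) (hb : |b| ≤ 1 / 2) : ‖a • x + b • y‖ < max ‖x‖ ‖y‖ := by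
  have hx : 0 < ‖x‖ := norm_pos_iff.2 (hxy.ne_zero 0)
  have hax : ‖a • x‖ ≤ 1 / 2 * max ‖x‖ ‖y‖ := by
    rw [norm_smul, Real.norm_eq_abs]
    gcongr
    exact le_max_left _ _
  have hby : ‖b • y‖ ≤ 1 / 2 * max ‖x‖ ‖y‖ := by
    rw [norm_smul, Real.norm_eq_abs]
    gcongr
    exact le_max_right _ _
  have hmax : 0 < max ‖x‖ ‖y‖ := lt_max_of_lt_left hx
  rcases eq_or_ne a 0 with rfl | ha0
  · rw [zero_smul, zero_add]
    linarith
  rcases eq_or_ne b 0 with rfl | hb0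
  · rw [zero_smul, add_zero]
    linarith
  have hli : LinearIndependent ℝ ![a • x, b • y] := by
    simpa using (LinearIndependent.pair_add_smul_add_smul_iff (x := x) (y := y) a 0 0 b).2
      ⟨hxy, by simp [ha0, hb0]⟩
  have hray : ¬SameRay ℝ (a • x) (b • y) := fun h =>
    sameRay_or_sameRay_neg_iff_not_linearIndependent.1 (Or.inl h) hli
  linarith [norm_add_lt_of_not_sameRay hray]

end LinearAlgebra

section Conformal

variable {V W : Type*} [NormedAddCommGroup V] [InnerProductSpace ℝ V]
  [NormedAddCommGroup W] [InnerProductSpace ℝ W]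

theorem exists_norm_map_eq_mul_of_isConformalMap {f : V →L[ℝ] W} (hf : IsConformalMap f) :
    ∃ k : ℝ, 0 < k ∧ ∀ v, ‖f v‖ = k * ‖v‖ := by
  obtain ⟨c, hc, L, rfl⟩ := hf
  exact ⟨|c|, abs_pos.2 hc, fun v => by simp [norm_smul]⟩

theorem exists_isConformalMap_of_inner_eq_mul {ι : Type*} [Finite ι] (b : Module.Basis ι ℝ V)
    (w : ι → W) {c : ℝ} (hc : 0 < c) (hw : ∀ i j, inner ℝ (w i) (w j) = c * inner ℝ (b i) (b j)) :
    ∃ f : V →L[ℝ] W, IsConformalMap f ∧ ∀ i, f (b i) = w i := by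
  have := Module.Finite.of_basis b
  let f : V →ₗ[ℝ] W := b.constr ℝ w
  have hfb (i : ι) : f (b i) = w i := b.constr_basis ℝ w i
  have hinner : (innerₗ W).compl₁₂ f f = c • innerₗ V :=
    b.ext fun i => b.ext fun j => by simpa [hfb] using hw i j
  refine ⟨f.toContinuousLinearMap, (isConformalMap_iff _).2 ⟨c, hc, fun u v => ?_⟩, hfb⟩
  simpa using LinearMap.congr_fun₂ hinner u v

theorem exists_isConformalMap_of_angle_eq (hV : Module.finrank ℝ V = 2) {x y : V} {u v : W}
    (hxy : LinearIndependent ℝ ![x, y]) (hu : u ≠ 0) (hnorm : ‖x‖ * ‖v‖ = ‖y‖ * ‖u‖)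
    (hangle : angle x y = angle u v) :
    ∃ f : V →L[ℝ] W, IsConformalMap f ∧ f x = u ∧ f y = v := by
  have hx : 0 < ‖x‖ := norm_pos_iff.2 (hxy.ne_zero 0)
  set k := ‖u‖ / ‖x‖ with hk
  have hnu : ‖u‖ = k * ‖x‖ := by rw [hk]; field_simp
  have hnv : ‖v‖ = k * ‖y‖ := by rw [hk]; field_simp; linarith
  have huv : inner ℝ u v = k ^ 2 * inner ℝ x y := by
    rw [← cos_angle_mul_norm_mul_norm u v, ← cos_angle_mul_norm_mul_norm x y, ← hangle, hnu, hnv]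
    ring
  let b := basisOfLinearIndependentOfCardEqFinrank hxy (by simp [hV])
  obtain ⟨f, hf, hfb⟩ := exists_isConformalMap_of_inner_eq_mul b ![u, v]
    (c := k ^ 2) (by have := norm_pos_iff.2 hu; positivity) (by
      simp only [Fin.forall_fin_two, b, coe_basisOfLinearIndependentOfCardEqFinrank]
      simp [huv, real_inner_comm, hnu, hnv, mul_pow])
  exact ⟨f, hf, by simpa [b] using hfb 0, by simpa [b] using hfb 1⟩

theorem conjTranspose_mul_self_eq_one_iff_norm_toEuclideanLin {𝕜 m n : Type*} [RCLike 𝕜]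
    [Fintype m] [Fintype n] [DecidableEq n] (U : Matrix m n 𝕜) :
    U.conjTranspose * U = 1 ↔ ∀ v, ‖Matrix.toEuclideanLin U v‖ = ‖v‖ := by
  rw [LinearMap.norm_map_iff_inner_map_map, ← Matrix.toEuclideanLin.injective.eq_iff,
    Matrix.toLpLin_mul_same, Matrix.toEuclideanLin_conjTranspose_eq_adjoint, Matrix.toLpLin_one]
  refine ⟨fun h v w => ?_, fun h => LinearMap.ext fun v => ext_inner_right 𝕜 fun w => ?_⟩
  · rw [← LinearMap.adjoint_inner_left, ← LinearMap.comp_apply, h, LinearMap.id_apply]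
  · rw [LinearMap.comp_apply, LinearMap.adjoint_inner_left, h, LinearMap.id_apply]

end Conformal

theorem latSimilar_iff_exists_isConformalMap {Λ Ω : Set E2} :
    LatSimilar Λ Ω ↔ ∃ f : E2 →L[ℝ] E2, IsConformalMap f ∧ Ω = f '' Λ := by
  constructor
  · rintro ⟨α, U, hα, hU, rfl⟩
    rw [← Matrix.conjTranspose_eq_transpose_of_trivial,
      conjTranspose_mul_self_eq_one_iff_norm_toEuclideanLin] at hU
    let L : E2 →ₗᵢ[ℝ] E2 := ⟨Matrix.toEuclideanLin U, hU⟩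
    exact ⟨α • L.toContinuousLinearMap, ⟨α, hα, L, rfl⟩, rfl⟩
  · rintro ⟨_, ⟨α, hα, L, rfl⟩, rfl⟩
    refine ⟨α, Matrix.toEuclideanLin.symm L.toLinearMap, hα, ?_, by simp⟩
    rw [← Matrix.conjTranspose_eq_transpose_of_trivial,
      conjTranspose_mul_self_eq_one_iff_norm_toEuclideanLin]
    simp

section SuccMin

variable {Λ : Set E2} {i : ℕ}

theorem succMin_le [NeZero i] {v : Fin i → E2} {r : ℝ} (hv : ∀ j, v j ∈ Λ ∧ ‖v j‖ ≤ r)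
    (hli : LinearIndependent ℝ v) : succMin Λ i ≤ r :=
  csInf_le ⟨0, fun _ h => h.1.le⟩
    ⟨(norm_pos_iff.2 (hli.ne_zero 0)).trans_le (hv 0).2, v, hv, hli⟩

theorem succMin_one_le_norm {x : E2} (hx : x ∈ Λ) (hx0 : x ≠ 0) : succMin Λ 1 ≤ ‖x‖ :=
  succMin_le (v := fun _ => x) (fun _ => ⟨hx, le_rfl⟩) (.of_subsingleton 0 hx0)

theorem succMin_two_le_max_norm {x y : E2} (hx : x ∈ Λ) (hy : y ∈ Λ)
    (hxy : LinearIndependent ℝ ![x, y]) : succMin Λ 2 ≤ max ‖x‖ ‖y‖ :=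
  succMin_le (v := ![x, y])
    (Fin.forall_fin_two.2 ⟨⟨hx, le_max_left ‖x‖ ‖y‖⟩, ⟨hy, le_max_right ‖x‖ ‖y‖⟩⟩) hxy

theorem exists_linearIndependent_norm_le_succMin
    (hfin : ∀ r, (Metric.closedBall 0 r ∩ Λ).Finite) {w : Fin i → E2} (hw : ∀ j, w j ∈ Λ)
    (hli : LinearIndependent ℝ w) :
    ∃ v : Fin i → E2, (∀ j, v j ∈ Λ ∧ ‖v j‖ ≤ succMin Λ i) ∧ LinearIndependent ℝ v := by
  let T : Set (Fin i → E2) := {v | (∀ j, v j ∈ Λ) ∧ LinearIndependent ℝ v ∧ ‖v‖ ≤ ‖w‖}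
  have hT : T.Finite := by
    refine (Set.Finite.pi' fun _ => hfin ‖w‖).subset fun v hv j => ⟨?_, hv.1 j⟩
    simpa using (norm_le_pi_norm v j).trans hv.2.2
  obtain ⟨v, ⟨hvΛ, hvli, hvw⟩, hvmin⟩ := Set.exists_min_image T norm hT ⟨w, hw, hli, le_rfl⟩
  suffices hle : ‖v‖ ≤ succMin Λ i from
    ⟨v, fun j => ⟨hvΛ j, (norm_le_pi_norm v j).trans hle⟩, hvli⟩
  refine le_csInf ⟨‖w‖ + 1, by positivity, w, fun j => ⟨hw j, ?_⟩, hli⟩ ?_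
  · linarith [norm_le_pi_norm w j]
  · rintro r ⟨hr, u, hu, huli⟩
    have hur : ‖u‖ ≤ r := (pi_norm_le_iff_of_nonneg hr.le).2 fun j => (hu j).2
    rcases le_total ‖u‖ ‖w‖ with huw | hwu
    · exact (hvmin u ⟨fun j => (hu j).1, huli, huw⟩).trans hur
    · exact hvw.trans (hwu.trans hur)

theorem succMin_image {f : E2 →ₗ[ℝ] E2} {k : ℝ} (hk : 0 < k) (hf : ∀ v, ‖f v‖ = k * ‖v‖) :
    succMin (f '' Λ) i = k * succMin Λ i := by
  have hker : LinearMap.ker f = ⊥ := LinearMap.ker_eq_bot'.2 fun v hv => by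
    simpa [hv, hk.ne'] using hf v
  rw [succMin, succMin, ← smul_eq_mul, ← Real.sInf_smul_of_nonneg hk.le]
  congr 1
  ext r
  constructor
  · rintro ⟨hr, v, hv, hli⟩
    choose hvΛ hvr using hv
    choose w hwΛ hwv using hvΛ
    obtain rfl : f ∘ w = v := funext hwv
    refine ⟨r / k, ⟨by positivity, w, fun j => ⟨hwΛ j, ?_⟩, hli.of_comp f⟩, ?_⟩
    · rw [le_div_iff₀' hk, ← hf]
      exact hvr j
    · exact mul_div_cancel₀ r hk.ne'
  · rintro ⟨s, ⟨hs, v, hv, hli⟩, rfl⟩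
    refine ⟨mul_pos hk hs, f ∘ v, fun j => ⟨⟨v j, (hv j).1, rfl⟩, ?_⟩, hli.map' f hker⟩
    simpa only [Function.comp_apply, hf, smul_eq_mul] using mul_le_mul_of_nonneg_left (hv j).2 hk.le

end SuccMin

section Basis

variable {Λ : Set E2} {x y u v : E2}

theorem IsZBasis.eq_span (h : IsZBasis Λ x y) : Λ = (Submodule.span ℤ {x, y} : Set E2) := by
  ext v
  simp only [h.2, Set.mem_ofPred_eq, SetLike.mem_coe, Submodule.mem_span_pair, eq_comm]

theorem IsLattice.exists_submodule (h : IsLattice Λ) : ∃ S : Submodule ℤ E2, Λ = S :=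
  let ⟨_, _, hxy⟩ := h
  ⟨_, hxy.eq_span⟩

theorem IsZBasis.left_mem (h : IsZBasis Λ x y) : x ∈ Λ :=
  h.eq_span ▸ Submodule.subset_span (by simp)

theorem IsZBasis.right_mem (h : IsZBasis Λ x y) : y ∈ Λ :=
  h.eq_span ▸ Submodule.subset_span (by simp)

theorem IsZBasis.finite_closedBall_inter (h : IsZBasis Λ x y) (r : ℝ) :
    (Metric.closedBall 0 r ∩ Λ).Finite := by
  let b := basisOfLinearIndependentOfCardEqFinrank h.1 (by simp)
  have hb : Set.range b = {x, y} := by simp [b, Set.pair_comm]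
  rw [h.eq_span, ← hb]
  exact ZSpan.setFinite_inter b Metric.isBounded_closedBall

theorem IsZBasis.image (h : IsZBasis Λ x y) {f : E2 →ₗ[ℝ] E2} (hf : Function.Injective f) :
    IsZBasis (f '' Λ) (f x) (f y) := by
  refine ⟨linearIndependent_pair_map h.1 hf, ?_⟩
  rw [h.2]
  ext v
  simp [eq_comm]

theorem detB_smul_add_smul (x y : E2) (a b c d : ℝ) :
    detB (a • x + b • y) (c • x + d • y) = |a * d - b * c| * detB x y := by
  rw [detB, detB, ← abs_mul]
  congr 1
  simp only [PiLp.add_apply, PiLp.smul_apply, smul_eq_mul]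
  ring

theorem detB_eq_sin_angle_mul_norm_mul_norm (x y : E2) :
    detB x y = sin (angle x y) * (‖x‖ * ‖y‖) := by
  rw [sin_angle_mul_norm_mul_norm, detB, ← Real.sqrt_sq_eq_abs]
  congr 1
  simp only [PiLp.inner_apply, Fin.sum_univ_two, RCLike.inner_apply, conj_trivial]
  ring

theorem IsZBasis.detB_le (h : IsZBasis Λ x y) (hu : u ∈ Λ) (hv : v ∈ Λ)
    (huv : LinearIndependent ℝ ![u, v]) : detB x y ≤ detB u v := by
  rw [h.2] at hu hv
  obtain ⟨a, b, rfl⟩ := hu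
  obtain ⟨c, d, rfl⟩ := hv
  simp only [← Int.cast_smul_eq_zsmul ℝ] at huv ⊢
  rw [LinearIndependent.pair_add_smul_add_smul_iff] at huv
  have hdet : a * d - b * c ≠ 0 := sub_ne_zero.2 (mod_cast huv.2)
  have hone : (1 : ℝ) ≤ |(a : ℝ) * d - b * c| := mod_cast Int.one_le_abs hdet
  rw [detB_smul_add_smul]
  exact le_mul_of_one_le_left (abs_nonneg _) hone

theorem IsZBasis.detB_eq (h : IsZBasis Λ x y) (h' : IsZBasis Λ u v) : detB x y = detB u v :=
  (h.detB_le h'.left_mem h'.right_mem h'.1).antisymm (h'.detB_le h.left_mem h.right_mem h.1)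

end Basis

section MinPair

variable {Λ : Set E2} {x y u v : E2}

theorem IsLattice.exists_norm_le_succMin (h : IsLattice Λ) {i : ℕ} (hi : i ≤ 2) :
    ∃ v : Fin i → E2, (∀ j, v j ∈ Λ ∧ ‖v j‖ ≤ succMin Λ i) ∧ LinearIndependent ℝ v := by
  obtain ⟨x, y, hxy⟩ := h
  have hmem : ∀ j, ![x, y] j ∈ Λ := Fin.forall_fin_two.2 ⟨hxy.left_mem, hxy.right_mem⟩
  exact exists_linearIndependent_norm_le_succMin hxy.finite_closedBall_inter
    (fun j => hmem (Fin.castLE hi j)) (hxy.1.comp _ (Fin.castLE_injective hi))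

theorem IsLattice.exists_isMinPair (h : IsLattice Λ) : ∃ x y, IsMinPair Λ x y := by
  obtain ⟨w, hw, hwli⟩ := h.exists_norm_le_succMin one_le_two
  obtain ⟨v, hv, hvli⟩ := h.exists_norm_le_succMin le_rfl
  set x := w 0
  have hx0 : x ≠ 0 := hwli.ne_zero 0
  have hx : ‖x‖ = succMin Λ 1 := (hw 0).2.antisymm (succMin_one_le_norm (hw 0).1 hx0)
  obtain ⟨y, hyΛ, hyle, hxy⟩ :
      ∃ y ∈ Λ, ‖y‖ ≤ succMin Λ 2 ∧ LinearIndependent ℝ ![x, y] := by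
    have hv01 : ![v 0, v 1] = v := List.ofFn_inj.1 rfl
    rcases linearIndependent_pair_or_of_ne_zero hx0 (hv01 ▸ hvli) with hli | hli
    exacts [⟨v 0, (hv 0).1, (hv 0).2, hli⟩, ⟨v 1, (hv 1).1, (hv 1).2, hli⟩]
  have hxley : ‖x‖ ≤ ‖y‖ := hx.trans_le (succMin_one_le_norm hyΛ (hxy.ne_zero 1))
  have hy : ‖y‖ = succMin Λ 2 :=
    hyle.antisymm ((succMin_two_le_max_norm (hw 0).1 hyΛ hxy).trans_eq (max_eq_right hxley))
  rcases le_total (angle x y) (π / 2) with hangle | hangle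
  · exact ⟨x, y, (hw 0).1, hyΛ, hxy, hx, hy, hangle⟩
  · obtain ⟨S, rfl⟩ := h.exists_submodule
    refine ⟨x, -y, (hw 0).1, S.neg_mem hyΛ, by simpa using hxy, hx, by rwa [norm_neg], ?_⟩
    rw [angle_neg_right]
    linarith

theorem IsMinPair.smul_add_smul_eq_zero_of_abs_le (hp : IsMinPair Λ x y) {a b : ℝ}
    (ha : |a| ≤ 1 / 2) (hb : |b| ≤ 1 / 2) (hmem : a • x + b • y ∈ Λ) : a • x + b • y = 0 := by
  obtain ⟨hxΛ, hyΛ, hxy, hx, hy, -⟩ := hp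
  by_contra hne
  have hle : ‖x‖ ≤ ‖a • x + b • y‖ := hx.trans_le (succMin_one_le_norm hmem hne)
  have hxley : ‖x‖ ≤ ‖y‖ := hx.trans_le (succMin_one_le_norm hyΛ (hxy.ne_zero 1))
  rcases eq_or_ne b 0 with rfl | hb0
  · have hx0 : 0 < ‖x‖ := norm_pos_iff.2 (hxy.ne_zero 0)
    rw [zero_smul, add_zero, norm_smul, Real.norm_eq_abs] at hle
    nlinarith
  · have hli : LinearIndependent ℝ ![x, a • x + b • y] := by
      simpa using (LinearIndependent.pair_add_smul_add_smul_iff (x := x) (y := y) 1 0 a b).2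
        ⟨hxy, by simpa using hb0⟩
    have hlt : ‖a • x + b • y‖ < ‖y‖ :=
      max_eq_right hxley ▸ norm_smul_add_smul_lt_max hxy ha hb
    have hge : ‖y‖ ≤ ‖a • x + b • y‖ :=
      hy.trans_le ((succMin_two_le_max_norm hxΛ hmem hli).trans_eq (max_eq_right hle))
    exact hlt.not_ge hge

theorem IsMinPair.isZBasis (hp : IsMinPair Λ x y) (hΛ : IsLattice Λ) : IsZBasis Λ x y := by
  obtain ⟨S, rfl⟩ := hΛ.exists_submodule
  obtain ⟨hx, hy, hxy, -⟩ := id hp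
  have hcomb (m n : ℤ) : m • x + n • y ∈ S := S.add_mem (S.smul_mem m hx) (S.smul_mem n hy)
  refine ⟨hxy, Set.Subset.antisymm (fun v hv => ?_) ?_⟩
  · obtain ⟨s, t, rfl⟩ := exists_smul_add_smul_eq (by simp) hxy v
    have hrem : s • x + t • y - (round s • x + round t • y) =
        (s - round s) • x + (t - round t) • y := by
      simp only [sub_smul, Int.cast_smul_eq_zsmul]
      abel
    refine ⟨round s, round t, sub_eq_zero.1 (hrem ▸ ?_)⟩
    exact hp.smul_add_smul_eq_zero_of_abs_le (abs_sub_round s) (abs_sub_round t)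
      (hrem ▸ S.sub_mem hv (hcomb _ _))
  · rintro _ ⟨m, n, rfl⟩
    exact hcomb m n

theorem IsMinPair.angle_eq (hp : IsMinPair Λ x y) (hq : IsMinPair Λ u v) (hΛ : IsLattice Λ) :
    angle x y = angle u v := by
  have hdet := (hp.isZBasis hΛ).detB_eq (hq.isZBasis hΛ)
  obtain ⟨-, -, hxy, hx, hy, hangle⟩ := hp
  obtain ⟨-, -, -, hu, hv, hangle'⟩ := hq
  have hpos : ‖x‖ * ‖y‖ ≠ 0 :=
    mul_ne_zero (norm_ne_zero_iff.2 (hxy.ne_zero 0)) (norm_ne_zero_iff.2 (hxy.ne_zero 1))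
  have hsin : sin (angle x y) = sin (angle u v) := by
    rw [detB_eq_sin_angle_mul_norm_mul_norm, detB_eq_sin_angle_mul_norm_mul_norm, hu, hv, ← hx,
      ← hy] at hdet
    exact mul_right_cancel₀ hpos hdet
  refine Real.injOn_sin ⟨?_, hangle⟩ ⟨?_, hangle'⟩ hsin
  · linarith [angle_nonneg x y, pi_pos]
  · linarith [angle_nonneg u v, pi_pos]

theorem IsMinPair.latAngle_eq (hp : IsMinPair Λ x y) (hΛ : IsLattice Λ) :
    latAngle Λ = angle x y := by
  have hex : ∃ p : E2 × E2, IsMinPair Λ p.1 p.2 := ⟨(x, y), hp⟩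
  rw [latAngle, dif_pos hex]
  exact IsMinPair.angle_eq hex.choose_spec hp hΛ

theorem IsMinPair.image (hp : IsMinPair Λ x y) {f : E2 →L[ℝ] E2} (hf : IsConformalMap f) :
    IsMinPair (f '' Λ) (f x) (f y) := by
  obtain ⟨hxΛ, hyΛ, hxy, hx, hy, hangle⟩ := hp
  obtain ⟨k, hk, hfk⟩ := exists_norm_map_eq_mul_of_isConformalMap hf
  have hsucc (i : ℕ) : succMin (f '' Λ) i = k * succMin Λ i :=
    succMin_image (f := f.toLinearMap) hk hfk
  refine ⟨⟨x, hxΛ, rfl⟩, ⟨y, hyΛ, rfl⟩, ?_, ?_, ?_, ?_⟩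
  · exact linearIndependent_pair_map (f := f.toLinearMap) hxy hf.injective
  · rw [hsucc, hfk, hx]
  · rw [hsucc, hfk, hy]
  · rwa [hf.preserves_angle]

theorem IsLattice.succMin_one_pos (h : IsLattice Λ) : 0 < succMin Λ 1 := by
  obtain ⟨x, y, -, -, hxy, hx, -⟩ := h.exists_isMinPair
  exact hx ▸ norm_pos_iff.2 (hxy.ne_zero 0)

end MinPair

theorem stmt9_general {Λ Ω : Set E2} (hΛ : IsLattice Λ) (hΩ : IsLattice Ω) :
    LatSimilar Λ Ω ↔
      succMin Λ 1 * succMin Ω 2 = succMin Λ 2 * succMin Ω 1 ∧ latAngle Λ = latAngle Ω := by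
  obtain ⟨x, y, hxy⟩ := hΛ.exists_isMinPair
  obtain ⟨-, -, hli, hx, hy, -⟩ := id hxy
  rw [latSimilar_iff_exists_isConformalMap]
  constructor
  · rintro ⟨f, hf, rfl⟩
    obtain ⟨k, -, hfk⟩ := exists_norm_map_eq_mul_of_isConformalMap hf
    obtain ⟨-, -, -, hfx, hfy, -⟩ := hxy.image hf
    refine ⟨by rw [← hfx, ← hfy, hfk, hfk, hx, hy]; ring, ?_⟩
    rw [hxy.latAngle_eq hΛ, (hxy.image hf).latAngle_eq hΩ, hf.preserves_angle]
  · rintro ⟨hratio, hangle⟩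
    obtain ⟨u, v, huv⟩ := hΩ.exists_isMinPair
    rw [hxy.latAngle_eq hΛ, huv.latAngle_eq hΩ] at hangle
    obtain ⟨-, -, hli', hu, hv, -⟩ := id huv
    obtain ⟨f, hf, rfl, rfl⟩ := exists_isConformalMap_of_angle_eq (by simp) hli
      (hli'.ne_zero 0) (by simpa [hx, hy, hu, hv] using hratio) hangle
    have himage := (hxy.isZBasis hΛ).image (f := f.toLinearMap) hf.injective
    exact ⟨f, hf, (huv.isZBasis hΩ).2.trans himage.2.symm⟩

/-- A full-rank lattice `Ω ⊆ ℝ²` is similar to a well-rounded full-rank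
lattice `Λ` iff `Ω` is also well-rounded and `θ(Λ) = θ(Ω)`. -/
theorem stmt9 (Λ Ω : Set E2) (hΛ : IsLattice Λ) (hΩ : IsLattice Ω)
    (hWR : succMin Λ 1 = succMin Λ 2) :
    LatSimilar Λ Ω ↔ (succMin Ω 1 = succMin Ω 2 ∧ latAngle Λ = latAngle Ω) := by
  rw [stmt9_general hΛ hΩ, hWR, mul_right_inj' (hWR ▸ hΛ.succMin_one_pos).ne',
    @eq_comm _ (succMin Ω 2)]
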